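/- arXiv:2211.11669 — 3 statements merged into one kernel-verified Lean document; each statement's English description precedes it below -/
import Mathlib

section
/- Let K be a field of characteristic 0, A a Lie algebra over K, V a K-vector space, Q = FreeLie(A ⊕ V)/I_A the coproduct of A and FreeLie(V), with structural Lie morphism j_A : A → Q and structural linear map ĵ_V : V → Q sending v to the class of of(0,v). Then for every K-linear Lie algebra derivation f : A → A and every K-linear map g : V → Q there exists a unique Lie algebra derivation φ : Q → Q such that φ ∘ j_A = j_A ∘ f and φ ∘ ĵ_V = g. Consequently, the derivations of Q that preserve the image j_A(A) are in bijection with pairs (f, g) consisting of a derivation f of A and a K-linear map g : V → Q. -/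
universe u

/-!
A derivation `Q → M` into a `Q`-module is the same thing as a Lie algebra section of the projection
of the semidirect sum `Q ⋉ M` onto `Q`. When `Q` is the coproduct of `A` and the free Lie algebra
on `V`, the universal property produces such sections from their restrictions to `A` and `V`, and
shows that these restrictions determine them. The universal property also retracts `Q` onto `A`, so
a derivation of `Q` preserving the image of `A` comes from a unique derivation of `A`.
-/

open LieAlgebra LieModule.Cohomology

section SemidirectSum

variable (R L M : Type*) [CommRing R] [LieRing L] [LieAlgebra R L]
  [AddCommGroup M] [Module R M] [LieRingModule L M] [LieModule R L M]

/-- The semidirect sum `L ⋉ M` of a Lie algebra and a module over it, in which `M` is an abelian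
ideal. It is encoded as the extension of `L` by `M` with zero cocycle. -/
abbrev ModuleSemidirectSum := ofTwoCocycle (0 : twoCocycle R L M)

namespace ModuleSemidirectSum

/-- The projection of `L ⋉ M` onto `L`. -/
def fst : ModuleSemidirectSum R L M →ₗ⁅R⁆ L where
  toFun z := ((ofProd _).symm z).1
  map_add' _ _ := rfl
  map_smul' _ _ := rfl
  map_lie' := rfl

/-- The projection of `L ⋉ M` onto `M`, which is only linear. -/
def snd : ModuleSemidirectSum R L M →ₗ[R] M where
  toFun z := ((ofProd _).symm z).2
  map_add' _ _ := rfl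
  map_smul' _ _ := rfl

variable {R L M}

theorem snd_lie (x y : ModuleSemidirectSum R L M) :
    snd R L M ⁅x, y⁆ = ⁅fst R L M x, snd R L M y⁆ - ⁅fst R L M y, snd R L M x⁆ := by
  change (0 : M) + _ - _ = _
  rw [zero_add]
  rfl

variable {A : Type*} [LieRing A] [LieAlgebra R A]

/-- The Lie algebra homomorphism `A → L ⋉ M` whose components are a homomorphism `j : A → L` and a
linear map `A → M` satisfying the Leibniz rule along `j`. -/
def lift (j : A →ₗ⁅R⁆ L) (δ : A →ₗ[R] M) (hδ : ∀ a b, δ ⁅a, b⁆ = ⁅j a, δ b⁆ - ⁅j b, δ a⁆) :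
    A →ₗ⁅R⁆ ModuleSemidirectSum R L M where
  toFun a := ofProd _ (j a, δ a)
  map_add' a b := by rw [map_add, map_add]; rfl
  map_smul' c a := by rw [map_smul, map_smul]; rfl
  map_lie' {a b} := by simp [bracket_ofTwoCocycle, hδ]

/-- The section of `L ⋉ M → L` corresponding to a derivation `L → M`. -/
def sectionOfDerivation (D : LieDerivation R L M) : L →ₗ⁅R⁆ ModuleSemidirectSum R L M :=
  lift LieHom.id (D : L →ₗ[R] M) D.apply_lie_eq_sub

/-- The derivation `L → M` corresponding to a section of `L ⋉ M → L`. -/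
def derivationOfSection (s : L →ₗ⁅R⁆ ModuleSemidirectSum R L M) (hs : ∀ x, fst R L M (s x) = x) :
    LieDerivation R L M where
  toLinearMap := snd R L M ∘ₗ (s : L →ₗ[R] ModuleSemidirectSum R L M)
  leibniz' x y := by
    change snd R L M (s ⁅x, y⁆) = ⁅x, snd R L M (s y)⁆ - ⁅y, snd R L M (s x)⁆
    rw [LieHom.map_lie, snd_lie, hs, hs]

end ModuleSemidirectSum

end SemidirectSum

section Coproduct

variable {K V : Type*} {A Q : Type u} [CommRing K] [LieRing A] [LieAlgebra K A]
  [AddCommGroup V] [Module K V] [LieRing Q] [LieAlgebra K Q]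

/-- The universal property exhibiting `Q` as the coproduct of the Lie algebra `A` and the free Lie
algebra on `V`, with structural maps `j` and `i`. It is tested on Lie algebras in the universe of
`A` and `Q`. -/
def IsCoproductWithFree (j : A →ₗ⁅K⁆ Q) (i : V →ₗ[K] Q) : Prop :=
  ∀ (N : Type u) [LieRing N] [LieAlgebra K N] (h : A →ₗ⁅K⁆ N) (g : V →ₗ[K] N),
    ∃! ψ : Q →ₗ⁅K⁆ N, (∀ a, ψ (j a) = h a) ∧ ∀ v, ψ (i v) = g v

namespace IsCoproductWithFree

variable {j : A →ₗ⁅K⁆ Q} {i : V →ₗ[K] Q}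

theorem lieHom_ext (hQ : IsCoproductWithFree j i) {N : Type u} [LieRing N] [LieAlgebra K N]
    {ψ₁ ψ₂ : Q →ₗ⁅K⁆ N} (hA : ∀ a, ψ₁ (j a) = ψ₂ (j a)) (hV : ∀ v, ψ₁ (i v) = ψ₂ (i v)) : ψ₁ = ψ₂ :=
  (hQ N (ψ₂.comp j) ((ψ₂ : Q →ₗ[K] N) ∘ₗ i)).unique ⟨hA, hV⟩ ⟨fun _ => rfl, fun _ => rfl⟩

theorem exists_leftInverse (hQ : IsCoproductWithFree j i) :
    ∃ ρ : Q →ₗ⁅K⁆ A, Function.LeftInverse ρ j :=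
  let ⟨ρ, hρ, _⟩ := hQ A LieHom.id (0 : V →ₗ[K] A)
  ⟨ρ, hρ.1⟩

section Derivation

variable {M : Type u} [AddCommGroup M] [Module K M] [LieRingModule Q M] [LieModule K Q M]

open ModuleSemidirectSum

theorem derivation_ext (hQ : IsCoproductWithFree j i) {D₁ D₂ : LieDerivation K Q M}
    (hA : ∀ a, D₁ (j a) = D₂ (j a)) (hV : ∀ v, D₁ (i v) = D₂ (i v)) : D₁ = D₂ := by
  have hsection : sectionOfDerivation D₁ = sectionOfDerivation D₂ :=
    hQ.lieHom_ext (fun a => congrArg (fun m => ofProd _ (j a, m)) (hA a))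
      fun v => congrArg (fun m => ofProd _ (i v, m)) (hV v)
  ext x
  exact congrArg (snd K Q M) (LieHom.congr_fun hsection x)

theorem exists_derivation (hQ : IsCoproductWithFree j i) (δ : A →ₗ[K] M)
    (hδ : ∀ a b, δ ⁅a, b⁆ = ⁅j a, δ b⁆ - ⁅j b, δ a⁆) (g : V →ₗ[K] M) :
    ∃ D : LieDerivation K Q M, (∀ a, D (j a) = δ a) ∧ ∀ v, D (i v) = g v := by
  let gᵢ : V →ₗ[K] ModuleSemidirectSum K Q M :=
    { toFun v := ofProd _ (i v, g v)
      map_add' v w := by rw [map_add, map_add]; rfl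
      map_smul' c v := by rw [map_smul, map_smul]; rfl }
  obtain ⟨s, ⟨hsA, hsV⟩, -⟩ := hQ _ (lift j δ hδ) gᵢ
  have hs : (fst K Q M).comp s = LieHom.id :=
    hQ.lieHom_ext (fun a => congrArg (fst K Q M) (hsA a)) fun v => congrArg (fst K Q M) (hsV v)
  exact ⟨derivationOfSection s (LieHom.congr_fun hs),
    fun a => congrArg (snd K Q M) (hsA a), fun v => congrArg (snd K Q M) (hsV v)⟩

end Derivation

theorem existsUnique_derivation_extending (hQ : IsCoproductWithFree j i)
    (f : LieDerivation K A A) (g : V →ₗ[K] Q) :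
    ∃! φ : LieDerivation K Q Q, (∀ a, φ (j a) = j (f a)) ∧ ∀ v, φ (i v) = g v := by
  obtain ⟨φ, hA, hV⟩ := hQ.exists_derivation ((j : A →ₗ[K] Q) ∘ₗ (f : A →ₗ[K] A))
    (fun a b => by simp) g
  exact ⟨φ, ⟨hA, hV⟩, fun φ' h =>
    hQ.derivation_ext (fun a => (h.1 a).trans (hA a).symm) fun v => (h.2 v).trans (hV v).symm⟩

theorem exists_derivation_of_preserves_range (hQ : IsCoproductWithFree j i)
    (φ : LieDerivation K Q Q) (hφ : ∀ a, ∃ b, φ (j a) = j b) :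
    ∃ f : LieDerivation K A A, ∀ a, φ (j a) = j (f a) := by
  obtain ⟨ρ, hρ⟩ := hQ.exists_leftInverse
  let f : LieDerivation K A A :=
    { toLinearMap := (ρ : Q →ₗ[K] A) ∘ₗ (φ : Q →ₗ[K] Q) ∘ₗ (j : A →ₗ[K] Q)
      leibniz' := fun a b => by simp [hρ _] }
  refine ⟨f, fun a => ?_⟩
  obtain ⟨b, hb⟩ := hφ a
  change φ (j a) = j (ρ (φ (j a)))
  rw [hb, hρ]

end IsCoproductWithFree

end Coproduct

section Quotient

variable {R L N : Type*} [CommRing R] [LieRing L] [LieAlgebra R L] [LieRing N] [LieAlgebra R N]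

/-- The projection onto the quotient by a Lie ideal, as a homomorphism of Lie algebras rather than
of `L`-modules. -/
def lieQuotientMk (I : LieIdeal R L) : L →ₗ⁅R⁆ L ⧸ I where
  toLinearMap := (LieSubmodule.Quotient.mk' I : L →ₗ[R] L ⧸ I)
  map_lie' := rfl

theorem lieQuotientMk_surjective (I : LieIdeal R L) : Function.Surjective (lieQuotientMk I) :=
  LieSubmodule.Quotient.surjective_mk' I

/-- The homomorphism on the quotient by a Lie ideal induced by a homomorphism killing the ideal. -/
def lieQuotientLift (I : LieIdeal R L) (ψ : L →ₗ⁅R⁆ N) (hψ : I ≤ ψ.ker) : L ⧸ I →ₗ⁅R⁆ N where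
  toLinearMap := I.toSubmodule.liftQ (ψ : L →ₗ[R] N) fun _ hx => LieHom.mem_ker.1 (hψ hx)
  map_lie' {p q} := by
    obtain ⟨x, rfl⟩ := lieQuotientMk_surjective I p
    obtain ⟨y, rfl⟩ := lieQuotientMk_surjective I q
    exact ψ.map_lie x y

end Quotient

section Presentation

variable {K V A : Type*} [CommRing K] [LieRing A] [LieAlgebra K A] [AddCommGroup V] [Module K V]
  {F : Type*} [LieRing F] [LieAlgebra K F] (of : A × V →ₗ[K] F)

/-- The ideal `I_A` of a Lie algebra `F` generated by `A ⊕ V` which identifies the bracket of `F`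
with that of `A`. -/
def bracketRelationIdeal : LieIdeal K F :=
  LieSubmodule.lieSpan K F
    { x : F | ∃ a b : A, x = ⁅of (a, 0), of (b, 0)⁆ - of (⁅a, b⁆, 0) }

theorem bracketRelationIdeal_le_ker_iff {N : Type*} [LieRing N] [LieAlgebra K N]
    (ψ : F →ₗ⁅K⁆ N) :
    bracketRelationIdeal of ≤ ψ.ker ↔
      ∀ a b, ψ (of (⁅a, b⁆, 0)) = ⁅ψ (of (a, 0)), ψ (of (b, 0))⁆ := by
  rw [bracketRelationIdeal, LieSubmodule.lieSpan_le]
  refine ⟨fun h a b => ?_, ?_⟩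
  · have hab := LieHom.mem_ker.1 (h ⟨a, b, rfl⟩)
    rw [map_sub, LieHom.map_lie, sub_eq_zero] at hab
    exact hab.symm
  · rintro h _ ⟨a, b, rfl⟩
    rw [SetLike.mem_coe, LieHom.mem_ker, map_sub, LieHom.map_lie, h, sub_self]

/-- The structural Lie morphism `j_A : A → F ⧸ I_A`. -/
def coproductInl : A →ₗ⁅K⁆ F ⧸ bracketRelationIdeal of where
  toLinearMap := (lieQuotientMk (bracketRelationIdeal of)).toLinearMap ∘ₗ of ∘ₗ LinearMap.inl K A V
  map_lie' {a b} := by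
    refine (bracketRelationIdeal_le_ker_iff of (lieQuotientMk _)).1 (fun x hx => ?_) a b
    exact LieHom.mem_ker.2 ((LieSubmodule.Quotient.mk_eq_zero _).2 hx)

/-- The structural linear map `ĵ_V : V → F ⧸ I_A`. -/
def coproductInr : V →ₗ[K] F ⧸ bracketRelationIdeal of :=
  (lieQuotientMk (bracketRelationIdeal of)).toLinearMap ∘ₗ of ∘ₗ LinearMap.inr K A V

end Presentation

theorem isCoproductWithFree_quotient {K V : Type*} {A F : Type u} [CommRing K]
    [LieRing A] [LieAlgebra K A] [AddCommGroup V] [Module K V] [LieRing F] [LieAlgebra K F]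
    (of : A × V →ₗ[K] F)
    (hF : ∀ (N : Type u) [LieRing N] [LieAlgebra K N] (g : A × V →ₗ[K] N),
      ∃! ψ : F →ₗ⁅K⁆ N, ∀ w : A × V, ψ (of w) = g w) :
    IsCoproductWithFree (coproductInl of) (coproductInr of) := by
  intro N _ _ h g
  obtain ⟨ψ, hψ, hψ_unique⟩ := hF N ((h : A →ₗ[K] N).coprod g)
  have hψA : ∀ a, ψ (of (a, 0)) = h a := fun a => by simp [hψ]
  have hψV : ∀ v, ψ (of (0, v)) = g v := fun v => by simp [hψ]
  have hker : bracketRelationIdeal of ≤ ψ.ker :=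
    (bracketRelationIdeal_le_ker_iff of ψ).2 fun a b => by simp only [hψA, LieHom.map_lie]
  refine ⟨lieQuotientLift _ ψ hker, ⟨hψA, hψV⟩, fun χ ⟨hχA, hχV⟩ => ?_⟩
  have hχ : χ.comp (lieQuotientMk _) = ψ := hψ_unique _ fun ⟨a, v⟩ => by
    have hsplit : of (a, v) = of (a, 0) + of (0, v) := by rw [← map_add]; simp
    rw [hsplit, map_add, LinearMap.coprod_apply]
    exact congrArg₂ (· + ·) (hχA a) (hχV v)
  ext q
  obtain ⟨x, rfl⟩ := lieQuotientMk_surjective _ q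
  exact LieHom.congr_fun hχ x

theorem statement6_general {K V : Type*} {A Q : Type u} [CommRing K] [LieRing A] [LieAlgebra K A]
    [AddCommGroup V] [Module K V] [LieRing Q] [LieAlgebra K Q]
    {j : A →ₗ⁅K⁆ Q} {i : V →ₗ[K] Q} (hQ : IsCoproductWithFree j i) :
    (∀ (f : LieDerivation K A A) (g : V →ₗ[K] Q),
      ∃! φ : LieDerivation K Q Q, (∀ a, φ (j a) = j (f a)) ∧ ∀ v, φ (i v) = g v)
    ∧ ∃ e : (LieDerivation K A A × (V →ₗ[K] Q)) ≃
        { φ : LieDerivation K Q Q // ∀ a, ∃ b, φ (j a) = j b },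
      ∀ p, (∀ a, (e p).val (j a) = j (p.1 a)) ∧ ∀ v, (e p).val (i v) = p.2 v := by
  refine ⟨hQ.existsUnique_derivation_extending, ?_⟩
  choose Φ hΦ hΦ_unique using hQ.existsUnique_derivation_extending
  refine ⟨Equiv.ofBijective (fun p => ⟨Φ p.1 p.2, fun a => ⟨p.1 a, (hΦ _ _).1 a⟩⟩) ⟨?_, ?_⟩,
    fun p => hΦ p.1 p.2⟩
  · rintro ⟨f, g⟩ ⟨f', g'⟩ h
    have hΦ_eq : Φ f g = Φ f' g' := congrArg Subtype.val h
    obtain ⟨ρ, hρ⟩ := hQ.exists_leftInverse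
    refine Prod.ext (LieDerivation.ext fun a => hρ.injective ?_) (LinearMap.ext fun v => ?_)
    · rw [← (hΦ f g).1, ← (hΦ f' g').1, hΦ_eq]
    · rw [← (hΦ f g).2, ← (hΦ f' g').2, hΦ_eq]
  · rintro ⟨φ, hφ⟩
    obtain ⟨f, hf⟩ := hQ.exists_derivation_of_preserves_range φ hφ
    refine ⟨(f, (φ : Q →ₗ[K] Q) ∘ₗ i), Subtype.ext ?_⟩
    exact (hΦ_unique _ _ φ ⟨hf, fun _ => rfl⟩).symm

/-- with `Q = FLAV ⧸ I_A` the coproduct of a Lie algebra `A` and the free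
Lie algebra on a vector space `V` (notation as in the paper: `FLAV` is the free Lie
algebra on `A ⊕ V`, `I_A` the ideal identifying the two brackets of `A`,
`j_A a = [ofAV (a,0)]` and `ĵ_V v = [ofAV (0,v)]`), for every Lie algebra derivation
`f : A → A` and every linear map `g : V → Q` there is a unique Lie algebra derivation
`φ : Q → Q` with `φ ∘ j_A = j_A ∘ f` and `φ ∘ ĵ_V = g`.  Consequently, the derivations
of `Q` preserving the image of `j_A` are in bijection with pairs `(f, g)`. -/
theorem statement6 (K : Type u) [Field K] [CharZero K]
    (A : Type u) [LieRing A] [LieAlgebra K A]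
    (V : Type u) [AddCommGroup V] [Module K V]
    (FLAV : Type u) [LieRing FLAV] [LieAlgebra K FLAV] (ofAV : A × V →ₗ[K] FLAV)
    (hunivAV : ∀ (N : Type u) [LieRing N] [LieAlgebra K N] (g : A × V →ₗ[K] N),
      ∃! ψ : FLAV →ₗ⁅K⁆ N, ∀ w : A × V, ψ (ofAV w) = g w)
    (IA : LieIdeal K FLAV)
    (hIA : IA = LieSubmodule.lieSpan K FLAV
      { x : FLAV | ∃ a b : A, x = ⁅ofAV (a, 0), ofAV (b, 0)⁆ - ofAV (⁅a, b⁆, 0) }) :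
    (∀ (f : LieDerivation K A A) (g : V →ₗ[K] FLAV ⧸ IA),
      ∃! φ : LieDerivation K (FLAV ⧸ IA) (FLAV ⧸ IA),
        (∀ a : A, φ (LieSubmodule.Quotient.mk' IA (ofAV (a, 0))) =
          LieSubmodule.Quotient.mk' IA (ofAV (f a, 0)))
        ∧ ∀ v : V, φ (LieSubmodule.Quotient.mk' IA (ofAV (0, v))) = g v)
    ∧ ∃ e : (LieDerivation K A A × (V →ₗ[K] FLAV ⧸ IA)) ≃
        { φ : LieDerivation K (FLAV ⧸ IA) (FLAV ⧸ IA) //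
          ∀ a : A, ∃ b : A, φ (LieSubmodule.Quotient.mk' IA (ofAV (a, 0))) =
            LieSubmodule.Quotient.mk' IA (ofAV (b, 0)) },
      ∀ p : LieDerivation K A A × (V →ₗ[K] FLAV ⧸ IA),
        (∀ a : A, (e p).val (LieSubmodule.Quotient.mk' IA (ofAV (a, 0))) =
          LieSubmodule.Quotient.mk' IA (ofAV (p.1 a, 0)))
        ∧ ∀ v : V, (e p).val (LieSubmodule.Quotient.mk' IA (ofAV (0, v))) = p.2 v := by
  subst hIA
  exact statement6_general (isCoproductWithFree_quotient ofAV hunivAV)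
end

section
/- Let M be a complete and cocomplete category equipped with a left pre-model structure (W, F, C', CW'). Then there exists a model structure on M whose weak equivalences are exactly the maps in W and whose fibrations are exactly the maps in F; in this model structure the cofibrations are precisely the retracts of maps in C' and the trivial cofibrations are precisely the retracts of maps in CW'. Moreover, this is the unique model structure on M with weak equivalences W and fibrations F. -/
open CategoryTheory

universe v u

variable {M : Type u} [Category.{v} M]

/-- `f` is a retract of `g` in the arrow category. -/
def IsRetractOfMap {A B C D : M} (f : A ⟶ B) (g : C ⟶ D) : Prop :=
  ∃ (i : A ⟶ C) (r : C ⟶ A) (i' : B ⟶ D) (r' : D ⟶ B),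
    i ≫ r = 𝟙 A ∧ i' ≫ r' = 𝟙 B ∧ i ≫ g = f ≫ i' ∧ g ≫ r' = r ≫ f

/-- A class of morphisms is closed under retracts. -/
def RetractClosed (P : MorphismProperty M) : Prop :=
  ∀ ⦃A B C D : M⦄ (f : A ⟶ B) (g : C ⟶ D), IsRetractOfMap f g → P g → P f

/-- The 2-out-of-3 property for a class of morphisms. -/
def TwoOutOfThree (W : MorphismProperty M) : Prop :=
  ∀ ⦃X Y Z : M⦄ (f : X ⟶ Y) (g : Y ⟶ Z),
    (W f → W g → W (f ≫ g)) ∧ (W f → W (f ≫ g) → W g) ∧ (W g → W (f ≫ g) → W f)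

/-- A model structure on `M` with weak equivalences `W`, fibrations `F`, cofibrations
`C`: axioms (M1)–(M4) of the paper. -/
structure IsModelStructure (W F C : MorphismProperty M) : Prop where
  two_out_of_three : TwoOutOfThree W
  retract_W : RetractClosed W
  retract_F : RetractClosed F
  retract_C : RetractClosed C
  lift_C_FW : ∀ ⦃A B X Y : M⦄ (i : A ⟶ B) (p : X ⟶ Y),
    C i → F p → W p → HasLiftingProperty i p
  lift_CW_F : ∀ ⦃A B X Y : M⦄ (i : A ⟶ B) (p : X ⟶ Y),
    C i → W i → F p → HasLiftingProperty i p
  fact_CW_F : ∀ ⦃X Y : M⦄ (g : X ⟶ Y),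
    ∃ (Z : M) (j : X ⟶ Z) (q : Z ⟶ Y), C j ∧ W j ∧ F q ∧ j ≫ q = g
  fact_C_FW : ∀ ⦃X Y : M⦄ (g : X ⟶ Y),
    ∃ (Z : M) (i : X ⟶ Z) (p : Z ⟶ Y), C i ∧ F p ∧ W p ∧ i ≫ p = g

/-- A left pre-model structure `(W, F, C', CW')` on `M`: axioms (L1)–(L5). -/
structure IsLeftPreModel (W F C' CW' : MorphismProperty M) : Prop where
  two_out_of_three : TwoOutOfThree W
  retract_W : RetractClosed W
  retract_F : RetractClosed F
  cw'_subset_w : ∀ ⦃X Y : M⦄ (f : X ⟶ Y), CW' f → W f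
  lift_C'_FW : ∀ ⦃A B X Y : M⦄ (i : A ⟶ B) (p : X ⟶ Y),
    C' i → F p → W p → HasLiftingProperty i p
  lift_CW'_F : ∀ ⦃A B X Y : M⦄ (i : A ⟶ B) (p : X ⟶ Y),
    CW' i → F p → HasLiftingProperty i p
  fact_CW'_F : ∀ ⦃X Y : M⦄ (g : X ⟶ Y),
    ∃ (Z : M) (j : X ⟶ Z) (q : Z ⟶ Y), CW' j ∧ F q ∧ j ≫ q = g
  fact_C'_FW : ∀ ⦃X Y : M⦄ (g : X ⟶ Y),
    ∃ (Z : M) (i : X ⟶ Z) (p : Z ⟶ Y), C' i ∧ F p ∧ W p ∧ i ≫ p = g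

/-!
Since cofibrations are forced to be the maps lifting on the left against `F ⊓ W`, set
`C := (F ⊓ W).llp`. The retract argument turns each factorisation of (L5) into a description by
retracts: `C = C'.retracts` and `F.llp = CW'.retracts`. What remains is `C ⊓ W = F.llp`. If `f` is
in `C ⊓ W` and `f = j ≫ q` with `j` in `CW'` and `q` in `F`, then `q` is in `W` by 2-out-of-3, so
`f` lifts against `q` and is a retract of `j`; conversely `F.llp = CW'.retracts` lies in `W`.
-/

open MorphismProperty

section RetractArgument

variable {W F I J : MorphismProperty M}

theorem retracts_of_hasLiftingProperty {A B : M} {f : A ⟶ B} (fact : MapFactorizationData I F f)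
    [HasLiftingProperty f fact.p] : I.retracts f :=
  ⟨_, _, fact.i, RetractArrow.ofLeftLiftingProperty fact.fac, fact.hi⟩

theorem llp_eq_retracts_of_le_llp [HasFactorization I F] (hIF : I ≤ F.llp) :
    F.llp = I.retracts := by
  refine le_antisymm (fun A B f hf => ?_) (retracts_le_iff.2 hIF)
  have fact := factorizationData I F f
  have := hf _ fact.hp
  exact retracts_of_hasLiftingProperty fact

theorem llp_inf_inf_eq_llp_of_le_llp [W.IsStableUnderRetracts] [W.HasOfPrecompProperty J]
    [HasFactorization J F] (hJW : J ≤ W) (hJF : J ≤ F.llp) :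
    (F ⊓ W).llp ⊓ W = F.llp := by
  have llp_eq : F.llp = J.retracts := llp_eq_retracts_of_le_llp hJF
  refine le_antisymm ?_ (le_inf (antitone_llp inf_le_left) ?_)
  · rintro A B f ⟨hf, hfW⟩
    have fact := factorizationData J F f
    have hpW : W fact.p := W.of_precomp fact.i fact.p fact.hi (by rwa [fact.fac])
    have := hf _ ⟨fact.hp, hpW⟩
    rw [llp_eq]
    exact retracts_of_hasLiftingProperty fact
  · rw [llp_eq]
    exact retracts_le_iff.2 hJW

end RetractArgument

theorem isRetractOfMap_iff_nonempty_retractArrow {A B C D : M} {f : A ⟶ B} {g : C ⟶ D} :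
    IsRetractOfMap f g ↔ Nonempty (RetractArrow f g) := by
  constructor
  · rintro ⟨i, r, i', r', hi, hi', hig, hgr⟩
    exact ⟨{ i := Arrow.homMk i i' hig
             r := Arrow.homMk r r' hgr.symm
             retract := by ext <;> assumption }⟩
  · rintro ⟨h⟩
    exact ⟨h.i.left, h.r.left, h.i.right, h.r.right, h.retract_left, h.retract_right, h.i_w,
      h.r_w.symm⟩

theorem retracts_iff_exists_isRetractOfMap {P : MorphismProperty M} {A B : M} {f : A ⟶ B} :
    P.retracts f ↔ ∃ (X Y : M) (g : X ⟶ Y), P g ∧ IsRetractOfMap f g := by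
  simp only [retracts, isRetractOfMap_iff_nonempty_retractArrow, exists_prop', and_comm]

theorem retractClosed_iff_isStableUnderRetracts {P : MorphismProperty M} :
    RetractClosed P ↔ P.IsStableUnderRetracts := by
  simp only [RetractClosed, isStableUnderRetracts_iff, isRetractOfMap_iff_nonempty_retractArrow,
    Nonempty.forall]

theorem TwoOutOfThree.hasOfPrecompProperty {W : MorphismProperty M} (h : TwoOutOfThree W) :
    W.HasOfPrecompProperty W where
  of_precomp f g := (h f g).2.1

theorem IsModelStructure.eq_llp {W F C : MorphismProperty M} (h : IsModelStructure W F C) :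
    C = (F ⊓ W).llp := by
  have : HasFactorization C (F ⊓ W) := ⟨fun f => by
    obtain ⟨Z, i, p, hi, hpF, hpW, fac⟩ := h.fact_C_FW f
    exact ⟨⟨Z, i, p, fac, hi, hpF, hpW⟩⟩⟩
  have : C.IsStableUnderRetracts := retractClosed_iff_isStableUnderRetracts.1 h.retract_C
  exact (llp_eq_of_le_llp_of_hasFactorization_of_isStableUnderRetracts
    fun _ _ i hi _ _ p hp => h.lift_C_FW i p hi hp.1 hp.2).symm

namespace IsLeftPreModel

variable {W F C' CW' : MorphismProperty M}

theorem le_llp_inf (h : IsLeftPreModel W F C' CW') : C' ≤ (F ⊓ W).llp :=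
  fun _ _ i hi _ _ p hp => h.lift_C'_FW i p hi hp.1 hp.2

theorem le_llp (h : IsLeftPreModel W F C' CW') : CW' ≤ F.llp :=
  fun _ _ j hj _ _ p hp => h.lift_CW'_F j p hj hp

theorem hasFactorization_inf (h : IsLeftPreModel W F C' CW') : HasFactorization C' (F ⊓ W) where
  nonempty_mapFactorizationData f := by
    obtain ⟨Z, i, p, hi, hpF, hpW, fac⟩ := h.fact_C'_FW f
    exact ⟨⟨Z, i, p, fac, hi, hpF, hpW⟩⟩

theorem hasFactorization (h : IsLeftPreModel W F C' CW') : HasFactorization CW' F where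
  nonempty_mapFactorizationData f := by
    obtain ⟨Z, j, q, hj, hq, fac⟩ := h.fact_CW'_F f
    exact ⟨⟨Z, j, q, fac, hj, hq⟩⟩

theorem llp_inf_eq_retracts (h : IsLeftPreModel W F C' CW') : (F ⊓ W).llp = C'.retracts :=
  have := h.hasFactorization_inf
  llp_eq_retracts_of_le_llp h.le_llp_inf

theorem llp_eq_retracts (h : IsLeftPreModel W F C' CW') : F.llp = CW'.retracts :=
  have := h.hasFactorization
  llp_eq_retracts_of_le_llp h.le_llp

theorem llp_inf_inf_eq_llp (h : IsLeftPreModel W F C' CW') : (F ⊓ W).llp ⊓ W = F.llp := by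
  have := h.hasFactorization
  have := retractClosed_iff_isStableUnderRetracts.1 h.retract_W
  have := h.two_out_of_three.hasOfPrecompProperty
  have := HasOfPrecompProperty.of_le W W h.cw'_subset_w
  exact llp_inf_inf_eq_llp_of_le_llp h.cw'_subset_w h.le_llp

theorem isModelStructure_llp_inf (h : IsLeftPreModel W F C' CW') :
    IsModelStructure W F (F ⊓ W).llp where
  two_out_of_three := h.two_out_of_three
  retract_W := h.retract_W
  retract_F := h.retract_F
  retract_C := retractClosed_iff_isStableUnderRetracts.2 inferInstance
  lift_C_FW _ _ _ _ _ p hi hpF hpW := hi p ⟨hpF, hpW⟩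
  lift_CW_F _ _ _ _ i p hi hiW hp := h.llp_inf_inf_eq_llp.le i ⟨hi, hiW⟩ p hp
  fact_CW_F _ _ g := by
    obtain ⟨Z, j, q, hj, hq, fac⟩ := h.fact_CW'_F g
    exact ⟨Z, j, q, antitone_llp inf_le_left j (h.le_llp j hj), h.cw'_subset_w j hj, hq, fac⟩
  fact_C_FW _ _ g := by
    obtain ⟨Z, i, p, hi, hpF, hpW, fac⟩ := h.fact_C'_FW g
    exact ⟨Z, i, p, h.le_llp_inf i hi, hpF, hpW, fac⟩

end IsLeftPreModel

theorem statement12_general (W F C' CW' : MorphismProperty M)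
    (h : IsLeftPreModel W F C' CW') :
    ∃ C : MorphismProperty M,
      IsModelStructure W F C
      ∧ (∀ ⦃A B : M⦄ (f : A ⟶ B),
          C f ↔ ∃ (X Y : M) (g : X ⟶ Y), C' g ∧ IsRetractOfMap f g)
      ∧ (∀ ⦃A B : M⦄ (f : A ⟶ B),
          (C f ∧ W f) ↔ ∃ (X Y : M) (g : X ⟶ Y), CW' g ∧ IsRetractOfMap f g)
      ∧ ∀ C₂ : MorphismProperty M, IsModelStructure W F C₂ → C₂ = C := by
  refine ⟨(F ⊓ W).llp, h.isModelStructure_llp_inf, fun A B f => ?_, fun A B f => ?_,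
    fun C₂ h₂ => h₂.eq_llp⟩
  · rw [h.llp_inf_eq_retracts, retracts_iff_exists_isRetractOfMap]
  · change ((F ⊓ W).llp ⊓ W) f ↔ _
    rw [h.llp_inf_inf_eq_llp, h.llp_eq_retracts, retracts_iff_exists_isRetractOfMap]

/-- a left pre-model structure `(W, F, C', CW')` on a complete and
cocomplete category `M` extends to a unique model structure with weak equivalences `W`
and fibrations `F`; its cofibrations are precisely the retracts of maps in `C'`, and
its trivial cofibrations are precisely the retracts of maps in `CW'`. -/
theorem statement12 [Limits.HasLimits M] [Limits.HasColimits M]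
    (W F C' CW' : MorphismProperty M) (h : IsLeftPreModel W F C' CW') :
    ∃ C : MorphismProperty M,
      IsModelStructure W F C
      ∧ (∀ ⦃A B : M⦄ (f : A ⟶ B),
          C f ↔ ∃ (X Y : M) (g : X ⟶ Y), C' g ∧ IsRetractOfMap f g)
      ∧ (∀ ⦃A B : M⦄ (f : A ⟶ B),
          (C f ∧ W f) ↔ ∃ (X Y : M) (g : X ⟶ Y), CW' g ∧ IsRetractOfMap f g)
      ∧ ∀ C₂ : MorphismProperty M, IsModelStructure W F C₂ → C₂ = C :=
  statement12_general W F C' CW' h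
end

section
/- Let C be a K-vector space and Δ : C → C ⊗ C a coassociative K-linear map. Then for every n ≥ 1, Δ maps ker Δⁿ into the image of (ker Δ^{n−1}) ⊗ (ker Δ^{n−1}) inside C ⊗ C: Δ(ker Δⁿ) ⊆ ker Δ^{n−1} ⊗ ker Δ^{n−1}. -/
/-! Regrouping tensor factors turns coassociativity into `Δⁿ⁺¹ = (Δⁿ ⊗ id) ∘ Δ`, to be compared with
the defining identity `Δⁿ⁺¹ = (id ⊗ Δⁿ) ∘ Δ`. An element `x` is therefore killed by `Δⁿ⁺¹` exactly
when `Δ x` is killed by both `Δⁿ ⊗ id` and `id ⊗ Δⁿ`, and by flatness the common kernel of these two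
maps is `ker Δⁿ ⊗ ker Δⁿ`. -/

open scoped TensorProduct

noncomputable section

/-- The iterated tensor power `C^{⊗(n+1)}`: `cpow K C 0 = C` and
`cpow K C (n+1) = C ⊗ cpow K C n`, bundled as objects of `ModuleCat K` so that the
module instances are available. -/
def cpow (K : Type) [Field K] (C : Type) [AddCommGroup C] [Module K C] :
    ℕ → ModuleCat K
  | 0 => ModuleCat.of K C
  | n + 1 => ModuleCat.of K (C ⊗[K] cpow K C n)

/-- The iterated coproducts `Δⁿ : C →ₗ[K] C^{⊗(n+1)}`, defined by `Δ⁰ = Id` and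
`Δⁿ = (Id_C ⊗ Δ^{n-1}) ∘ Δ`. -/
def iterDelta (K : Type) [Field K] (C : Type) [AddCommGroup C] [Module K C]
    (Δ : C →ₗ[K] C ⊗[K] C) : (n : ℕ) → (C →ₗ[K] cpow K C n)
  | 0 => LinearMap.id
  | n + 1 =>
      (show C ⊗[K] cpow K C n →ₗ[K] cpow K C (n + 1) from LinearMap.id).comp
        ((TensorProduct.map LinearMap.id (iterDelta K C Δ n)).comp Δ)

theorem ker_rTensor_inf_ker_lTensor {R M N P Q : Type*} [CommRing R] [AddCommGroup M] [Module R M]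
    [AddCommGroup N] [Module R N] [AddCommGroup P] [Module R P] [AddCommGroup Q] [Module R Q]
    (f : M →ₗ[R] P) (g : N →ₗ[R] Q) [Module.Flat R M] [Module.Flat R P]
    [Module.Flat R (LinearMap.ker g)] :
    LinearMap.ker (f.rTensor N) ⊓ LinearMap.ker (g.lTensor M) =
      LinearMap.range (TensorProduct.mapIncl (LinearMap.ker f) (LinearMap.ker g)) := by
  set ι := (LinearMap.ker g).subtype
  have hι : LinearMap.ker (ι.lTensor P) = ⊥ := LinearMap.ker_eq_bot.2 <|
    Module.Flat.lTensor_preserves_injective_linearMap ι (LinearMap.ker g).subtype_injective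
  have hf : LinearMap.ker (f.rTensor (LinearMap.ker g)) =
      LinearMap.range ((LinearMap.ker f).subtype.rTensor (LinearMap.ker g)) :=
    (Module.Flat.rTensor_exact _ f.exact_subtype_ker_map).linearMap_ker_eq
  have hg : LinearMap.ker (g.lTensor M) = LinearMap.range (ι.lTensor M) :=
    (Module.Flat.lTensor_exact M g.exact_subtype_ker_map).linearMap_ker_eq
  calc LinearMap.ker (f.rTensor N) ⊓ LinearMap.ker (g.lTensor M)
      = (LinearMap.ker (f.rTensor N ∘ₗ ι.lTensor M)).map (ι.lTensor M) := by
        rw [hg, LinearMap.ker_comp, Submodule.map_comap_eq, inf_comm]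
    _ = (LinearMap.ker (ι.lTensor P ∘ₗ f.rTensor (LinearMap.ker g))).map (ι.lTensor M) := by
        rw [LinearMap.rTensor_comp_lTensor, LinearMap.lTensor_comp_rTensor]
    _ = (LinearMap.range ((LinearMap.ker f).subtype.rTensor (LinearMap.ker g))).map
          (ι.lTensor M) := by
        rw [LinearMap.ker_comp_of_ker_eq_bot _ hι, hf]
    _ = LinearMap.range (TensorProduct.mapIncl (LinearMap.ker f) (LinearMap.ker g)) := by
        rw [← LinearMap.range_comp, LinearMap.lTensor_comp_rTensor, TensorProduct.mapIncl]

theorem rTensor_lTensor_comp_of_coassoc {R C M : Type*} [CommSemiring R] [AddCommMonoid C]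
    [Module R C] [AddCommMonoid M] [Module R M] {Δ : C →ₗ[R] C ⊗[R] C}
    (hco : Δ.rTensor C ∘ₗ Δ =
      (TensorProduct.assoc R C C C).symm.toLinearMap ∘ₗ Δ.lTensor C ∘ₗ Δ)
    (f : C →ₗ[R] M) :
    (f.lTensor C ∘ₗ Δ).rTensor C ∘ₗ Δ =
      (TensorProduct.assoc R C M C).symm.toLinearMap ∘ₗ (f.rTensor C ∘ₗ Δ).lTensor C ∘ₗ Δ := by
  rw [LinearMap.rTensor_comp, LinearMap.comp_assoc, hco, ← LinearMap.comp_assoc,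
    LinearMap.rTensor_lTensor_comp_assoc_symm, LinearMap.lTensor_comp, LinearMap.comp_assoc,
    LinearMap.comp_assoc]

section IteratedCoproduct

variable {K : Type} [Field K] {C : Type} [AddCommGroup C] [Module K C]

variable (K C) in
/-- The regrouping `C^{⊗(n+1)} ⊗ C ≃ C ⊗ C^{⊗(n+1)}` that preserves the order of the factors (it is
not the swap); it is needed because `cpow` brackets tensor powers to the right. -/
def cpowTensorEquiv : (n : ℕ) → cpow K C n ⊗[K] C ≃ₗ[K] C ⊗[K] cpow K C n
  | 0 => LinearEquiv.refl K (C ⊗[K] C)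
  | n + 1 => TensorProduct.assoc K C (cpow K C n) C ≪≫ₗ (cpowTensorEquiv n).lTensor C

theorem cpowTensorEquiv_comp_rTensor_iterDelta_comp {Δ : C →ₗ[K] C ⊗[K] C}
    (hco : Δ.rTensor C ∘ₗ Δ =
      (TensorProduct.assoc K C C C).symm.toLinearMap ∘ₗ Δ.lTensor C ∘ₗ Δ) (n : ℕ) :
    (cpowTensorEquiv K C n).toLinearMap ∘ₗ (iterDelta K C Δ n).rTensor C ∘ₗ Δ =
      (iterDelta K C Δ n).lTensor C ∘ₗ Δ := by
  induction n with
  | zero =>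
    change LinearMap.id ∘ₗ LinearMap.id.rTensor C ∘ₗ Δ = LinearMap.id.lTensor C ∘ₗ Δ
    rw [LinearMap.rTensor_id, LinearMap.lTensor_id, LinearMap.id_comp]
  | succ n ih =>
    set D := iterDelta K C Δ n
    set e := (cpowTensorEquiv K C n).toLinearMap
    set α := TensorProduct.assoc K C (cpow K C n) C
    change (e.lTensor C ∘ₗ α.toLinearMap) ∘ₗ (D.lTensor C ∘ₗ Δ).rTensor C ∘ₗ Δ =
      (D.lTensor C ∘ₗ Δ).lTensor C ∘ₗ Δ
    calc (e.lTensor C ∘ₗ α.toLinearMap) ∘ₗ (D.lTensor C ∘ₗ Δ).rTensor C ∘ₗ Δ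
        = e.lTensor C ∘ₗ (D.rTensor C ∘ₗ Δ).lTensor C ∘ₗ Δ := by
          rw [rTensor_lTensor_comp_of_coassoc hco, LinearMap.comp_assoc,
            LinearEquiv.comp_symm_assoc]
      _ = (D.lTensor C ∘ₗ Δ).lTensor C ∘ₗ Δ := by
          rw [← ih, LinearMap.lTensor_comp _ e, LinearMap.comp_assoc]

theorem ker_iterDelta_succ (Δ : C →ₗ[K] C ⊗[K] C) (n : ℕ) :
    LinearMap.ker (iterDelta K C Δ (n + 1)) =
      (LinearMap.ker ((iterDelta K C Δ n).lTensor C)).comap Δ :=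
  LinearMap.ker_comp Δ ((iterDelta K C Δ n).lTensor C)

theorem ker_iterDelta_succ_of_coassoc {Δ : C →ₗ[K] C ⊗[K] C}
    (hco : Δ.rTensor C ∘ₗ Δ =
      (TensorProduct.assoc K C C C).symm.toLinearMap ∘ₗ Δ.lTensor C ∘ₗ Δ) (n : ℕ) :
    LinearMap.ker (iterDelta K C Δ (n + 1)) =
      (LinearMap.ker ((iterDelta K C Δ n).rTensor C)).comap Δ := by
  rw [ker_iterDelta_succ, ← LinearMap.ker_comp, ← LinearMap.ker_comp,
    ← cpowTensorEquiv_comp_rTensor_iterDelta_comp hco n, LinearEquiv.ker_comp]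

end IteratedCoproduct

theorem statement13_general {K : Type} [Field K] {C : Type} [AddCommGroup C] [Module K C]
    {Δ : C →ₗ[K] C ⊗[K] C}
    (hco : Δ.rTensor C ∘ₗ Δ =
      (TensorProduct.assoc K C C C).symm.toLinearMap ∘ₗ Δ.lTensor C ∘ₗ Δ) (n : ℕ) :
    LinearMap.ker (iterDelta K C Δ (n + 1)) =
      (LinearMap.range (TensorProduct.mapIncl (LinearMap.ker (iterDelta K C Δ n))
        (LinearMap.ker (iterDelta K C Δ n)))).comap Δ := by
  rw [← ker_rTensor_inf_ker_lTensor, Submodule.comap_inf, ← ker_iterDelta_succ,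
    ← ker_iterDelta_succ_of_coassoc hco, inf_idem]

/-- for a coassociative `Δ : C → C ⊗ C` and every `n ≥ 1`,
`Δ` maps `ker Δⁿ` into the image of `(ker Δ^{n-1}) ⊗ (ker Δ^{n-1})` inside `C ⊗ C`
(stated with `n + 1` in place of `n`, so that `n - 1` becomes `n`). -/
theorem statement13 (K : Type) [Field K] [CharZero K]
    (C : Type) [AddCommGroup C] [Module K C]
    (Δ : C →ₗ[K] C ⊗[K] C)
    (hco : (TensorProduct.map Δ LinearMap.id).comp Δ =
      ((TensorProduct.assoc K C C C).symm.toLinearMap).comp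
        ((TensorProduct.map LinearMap.id Δ).comp Δ)) :
    ∀ n : ℕ,
      Submodule.map Δ (LinearMap.ker (iterDelta K C Δ (n + 1))) ≤
        LinearMap.range (TensorProduct.map
          (LinearMap.ker (iterDelta K C Δ n)).subtype
          (LinearMap.ker (iterDelta K C Δ n)).subtype) :=
  fun n ↦ Submodule.map_le_iff_le_comap.2 (statement13_general hco n).le

end
end
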